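/- Minimal quintic cone in ℝ^{2n+2}: let n ≥ 1, and on ℝ^{2n+2} set T₁ = Σⱼ(xⱼ² − yⱼ²) and T₂ = Σⱼ 2xⱼyⱼ (sums over j = 1,…,n). The quintic polynomial P = y_{n+1}·(T₁² − T₂²) − x_{n+1}·(2T₁T₂) satisfies ‖∇P‖²·ΔP − Δ_∞P = 0 at every point of {P = 0} where ∇P ≠ 0; hence {y_{n+1}(T₁² − T₂²) − x_{n+1}(2T₁T₂) = 0} is a minimal quintic cone in ℝ^{2n+2}. -/

import Mathlib

/-!
Write `φ = x_{n+1} + i y_{n+1}`, `T = T₁ + i T₂ = Σⱼ (xⱼ + i yⱼ)²` and `ψ = T²`, so that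
`P = Im (φ ψ̄)`. Both `φ` and `ψ` are harmonic morphisms to `ℂ`, of squared dilations `1` and
`ν = 16 |T|² R` with `R = Σⱼ (xⱼ² + yⱼ²)`, and they depend on disjoint sets of variables. Hence
`ΔP = 0` and `‖∇P‖² = |ψ|² + ν |φ|²`. The functions `|φ|²`, `|ψ|²` and `ν` all have derivatives
along `∇P` divisible by `P`, and therefore so is `Δ_∞P = ½ ⟨∇‖∇P‖², ∇P⟩`.
-/

noncomputable section

variable {ι : Type*} [Fintype ι] [DecidableEq ι]

/-- The `i`-th partial derivative `∂F/∂zᵢ` of `F : ℝ^ι → ℝ` at `x`. -/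
def pd (F : EuclideanSpace ℝ ι → ℝ) (x : EuclideanSpace ℝ ι) (i : ι) : ℝ :=
  fderiv ℝ F x (EuclideanSpace.single i 1)

/-- The Laplacian `ΔF = Σᵢ ∂²F/∂zᵢ²` at `x`. -/
def lap (F : EuclideanSpace ℝ ι → ℝ) (x : EuclideanSpace ℝ ι) : ℝ :=
  ∑ i, fderiv ℝ (fun y => pd F y i) x (EuclideanSpace.single i 1)

/-- The infinity-Laplacian `Δ_∞F = Σ_{i,j} (∂F/∂zᵢ)(∂F/∂zⱼ)(∂²F/∂zᵢ∂zⱼ)` at `x`. -/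
def infLap (F : EuclideanSpace ℝ ι → ℝ) (x : EuclideanSpace ℝ ι) : ℝ :=
  ∑ i, ∑ j, pd F x i * pd F x j * fderiv ℝ (fun y => pd F y i) x (EuclideanSpace.single j 1)

/-- The squared norm `‖∇F‖²` of the gradient of `F` at `x`. -/
def gradSq (F : EuclideanSpace ℝ ι → ℝ) (x : EuclideanSpace ℝ ι) : ℝ :=
  ∑ i, (pd F x i) ^ 2

/-- `T₁ = Σ_{j=1}^{n} (xⱼ² − yⱼ²)` on `ℝ^{2n+2}`, with `xⱼ = z (inl j)`, `yⱼ = z (inr j)`. -/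
def T1 (n : ℕ) (z : EuclideanSpace ℝ (Fin (n + 1) ⊕ Fin (n + 1))) : ℝ :=
  ∑ j : Fin n, ((z (Sum.inl j.castSucc)) ^ 2 - (z (Sum.inr j.castSucc)) ^ 2)

/-- `T₂ = Σ_{j=1}^{n} 2xⱼyⱼ` on `ℝ^{2n+2}`. -/
def T2 (n : ℕ) (z : EuclideanSpace ℝ (Fin (n + 1) ⊕ Fin (n + 1))) : ℝ :=
  ∑ j : Fin n, 2 * z (Sum.inl j.castSucc) * z (Sum.inr j.castSucc)

/-- The quintic `P = y_{n+1}·(T₁² − T₂²) − x_{n+1}·(2T₁T₂)`. -/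
def QuinticP (n : ℕ) (z : EuclideanSpace ℝ (Fin (n + 1) ⊕ Fin (n + 1))) : ℝ :=
  z (Sum.inr (Fin.last n)) * ((T1 n z) ^ 2 - (T2 n z) ^ 2) -
    z (Sum.inl (Fin.last n)) * (2 * T1 n z * T2 n z)

section GradientCalculus

variable {f g h : EuclideanSpace ℝ ι → ℝ} {x : EuclideanSpace ℝ ι}

/-- The inner product `⟨∇f, ∇g⟩` of two gradients (the carré du champ of `Δ`), as a function. -/
def gradInner (f g : EuclideanSpace ℝ ι → ℝ) (x : EuclideanSpace ℝ ι) : ℝ :=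
  ∑ i, pd f x i * pd g x i

lemma gradInner_self (f : EuclideanSpace ℝ ι → ℝ) : gradInner f f = gradSq f := by
  funext x
  simp only [gradInner, gradSq, sq]

lemma gradInner_comm (f g : EuclideanSpace ℝ ι → ℝ) : gradInner f g = gradInner g f := by
  funext x
  simp only [gradInner, mul_comm]

lemma pd_add (hf : DifferentiableAt ℝ f x) (hg : DifferentiableAt ℝ g x) (i : ι) :
    pd (f + g) x i = pd f x i + pd g x i := by
  simp [pd, fderiv_add hf hg]

lemma pd_sub (hf : DifferentiableAt ℝ f x) (hg : DifferentiableAt ℝ g x) (i : ι) :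
    pd (f - g) x i = pd f x i - pd g x i := by
  simp [pd, fderiv_sub hf hg]

lemma pd_mul (hf : DifferentiableAt ℝ f x) (hg : DifferentiableAt ℝ g x) (i : ι) :
    pd (f * g) x i = f x * pd g x i + g x * pd f x i := by
  simp [pd, fderiv_mul hf hg]

lemma pd_sum {κ : Type*} {s : Finset κ} {F : κ → EuclideanSpace ℝ ι → ℝ}
    (hF : ∀ k ∈ s, DifferentiableAt ℝ (F k) x) (i : ι) :
    pd (∑ k ∈ s, F k) x i = ∑ k ∈ s, pd (F k) x i := by
  simp [pd, fderiv_sum hF]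

lemma gradInner_add_left (hf : Differentiable ℝ f) (hg : Differentiable ℝ g) :
    gradInner (f + g) h = gradInner f h + gradInner g h := by
  funext x
  simp only [gradInner, Pi.add_apply, pd_add (hf x) (hg x), add_mul, Finset.sum_add_distrib]

lemma gradInner_sub_left (hf : Differentiable ℝ f) (hg : Differentiable ℝ g) :
    gradInner (f - g) h = gradInner f h - gradInner g h := by
  funext x
  simp only [gradInner, Pi.sub_apply, pd_sub (hf x) (hg x), sub_mul, Finset.sum_sub_distrib]

lemma gradInner_mul_left (hf : Differentiable ℝ f) (hg : Differentiable ℝ g) :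
    gradInner (f * g) h = f * gradInner g h + g * gradInner f h := by
  funext x
  simp only [gradInner, Pi.add_apply, Pi.mul_apply, pd_mul (hf x) (hg x), add_mul, mul_assoc,
    Finset.sum_add_distrib, Finset.mul_sum]

lemma gradInner_sum_left {κ : Type*} {s : Finset κ} {F : κ → EuclideanSpace ℝ ι → ℝ}
    (hF : ∀ k ∈ s, Differentiable ℝ (F k)) :
    gradInner (∑ k ∈ s, F k) h = ∑ k ∈ s, gradInner (F k) h := by
  funext x
  simp only [gradInner, Finset.sum_apply, pd_sum fun k hk => hF k hk x, Finset.sum_mul]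
  exact Finset.sum_comm

lemma gradInner_ofNat_left (k : ℕ) [k.AtLeastTwo] (h : EuclideanSpace ℝ ι → ℝ) :
    gradInner ofNat(k) h = 0 := by
  funext x
  simp [gradInner, pd]

lemma gradInner_one_left (h : EuclideanSpace ℝ ι → ℝ) : gradInner 1 h = 0 := by
  funext x
  simp [gradInner, pd]

lemma gradInner_sub_right (hf : Differentiable ℝ f) (hg : Differentiable ℝ g) :
    gradInner h (f - g) = gradInner h f - gradInner h g := by
  simp only [gradInner_comm h, gradInner_sub_left hf hg]

lemma gradInner_mul_right (hf : Differentiable ℝ f) (hg : Differentiable ℝ g) :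
    gradInner h (f * g) = f * gradInner h g + g * gradInner h f := by
  simp only [gradInner_comm h, gradInner_mul_left hf hg]

lemma gradInner_ofNat_right (k : ℕ) [k.AtLeastTwo] (h : EuclideanSpace ℝ ι → ℝ) :
    gradInner h ofNat(k) = 0 := by
  rw [gradInner_comm, gradInner_ofNat_left]

lemma gradInner_normSq_left (hf : Differentiable ℝ f) (hg : Differentiable ℝ g) :
    gradInner (f ^ 2 + g ^ 2) h = 2 * (f * gradInner f h + g * gradInner g h) := by
  simp (disch := fun_prop) only [pow_two, gradInner_add_left, gradInner_mul_left]
  ring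

lemma gradInner_four_mul_left (hf : Differentiable ℝ f) :
    gradInner (4 * f) h = 4 * gradInner f h := by
  rw [gradInner_mul_left (by fun_prop) hf, gradInner_ofNat_left, mul_zero, add_zero]

lemma gradInner_sum_right {κ : Type*} {s : Finset κ} {F : κ → EuclideanSpace ℝ ι → ℝ}
    (hF : ∀ k ∈ s, Differentiable ℝ (F k)) :
    gradInner h (∑ k ∈ s, F k) = ∑ k ∈ s, gradInner h (F k) := by
  simp only [gradInner_comm h, gradInner_sum_left hF]

lemma gradInner_sum_sum_of_orthogonal {κ : Type*} {s : Finset κ}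
    {F G : κ → EuclideanSpace ℝ ι → ℝ} (hF : ∀ k ∈ s, Differentiable ℝ (F k))
    (hG : ∀ k ∈ s, Differentiable ℝ (G k))
    (horth : ∀ k ∈ s, ∀ l ∈ s, k ≠ l → gradInner (F k) (G l) = 0) :
    gradInner (∑ k ∈ s, F k) (∑ k ∈ s, G k) = ∑ k ∈ s, gradInner (F k) (G k) := by
  rw [gradInner_sum_left hF]
  refine Finset.sum_congr rfl fun k hk => ?_
  rw [gradInner_sum_right hG]
  exact Finset.sum_eq_single_of_mem k hk fun l hl hlk => horth k hk l hl hlk.symm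

lemma differentiable_pd (hf : ContDiff ℝ 2 f) (i : ι) : Differentiable ℝ fun x => pd f x i :=
  ((hf.fderiv_right (m := 1) le_rfl).clm_apply contDiff_const).differentiable one_ne_zero

lemma differentiable_gradInner (hf : ContDiff ℝ 2 f) (hg : ContDiff ℝ 2 g) :
    Differentiable ℝ (gradInner f g) :=
  Differentiable.fun_sum fun i _ => (differentiable_pd hf i).mul (differentiable_pd hg i)

lemma lap_eq_sum_pd (f : EuclideanSpace ℝ ι → ℝ) (x : EuclideanSpace ℝ ι) :
    lap f x = ∑ i, pd (fun y => pd f y i) x i := rfl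

lemma infLap_eq_sum_pd (f : EuclideanSpace ℝ ι → ℝ) (x : EuclideanSpace ℝ ι) :
    infLap f x = ∑ i, ∑ j, pd f x i * pd f x j * pd (fun y => pd f y i) x j := rfl

lemma lap_sub (hf : ContDiff ℝ 2 f) (hg : ContDiff ℝ 2 g) : lap (f - g) = lap f - lap g := by
  funext x
  have hpd (i : ι) : (fun y => pd (f - g) y i) = (fun y => pd f y i) - fun y => pd g y i :=
    funext fun y => pd_sub (hf.differentiable two_ne_zero y) (hg.differentiable two_ne_zero y) i
  simp only [lap_eq_sum_pd, hpd, pd_sub (differentiable_pd hf _ x) (differentiable_pd hg _ x),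
    Finset.sum_sub_distrib, Pi.sub_apply]

lemma lap_mul (hf : ContDiff ℝ 2 f) (hg : ContDiff ℝ 2 g) :
    lap (f * g) = f * lap g + 2 * gradInner f g + g * lap f := by
  have hf' := hf.differentiable two_ne_zero
  have hg' := hg.differentiable two_ne_zero
  have hpd (i : ι) : (fun y => pd (f * g) y i) = f * (fun y => pd g y i) + g * fun y => pd f y i :=
    funext fun y => pd_mul (hf' y) (hg' y) i
  funext x
  have hpd₂ (i : ι) : pd (fun y => pd (f * g) y i) x i =
      f x * pd (fun y => pd g y i) x i + 2 * (pd f x i * pd g x i)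
        + g x * pd (fun y => pd f y i) x i := by
    have hfi := differentiable_pd hf i
    have hgi := differentiable_pd hg i
    rw [hpd, pd_add ((hf'.mul hgi) x) ((hg'.mul hfi) x), pd_mul (hf' x) (hgi x),
      pd_mul (hg' x) (hfi x)]
    ring
  simp only [lap_eq_sum_pd, gradInner, hpd₂, Finset.sum_add_distrib, ← Finset.mul_sum, Pi.add_apply,
    Pi.mul_apply, Pi.ofNat_apply]

lemma lap_ofNat (k : ℕ) [k.AtLeastTwo] : lap (ofNat(k) : EuclideanSpace ℝ ι → ℝ) = 0 := by
  funext x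
  simp [lap, pd]

lemma lap_sum {κ : Type*} {s : Finset κ} {F : κ → EuclideanSpace ℝ ι → ℝ}
    (hF : ∀ k ∈ s, ContDiff ℝ 2 (F k)) : lap (∑ k ∈ s, F k) = ∑ k ∈ s, lap (F k) := by
  funext x
  have hpd (i : ι) : (fun y => pd (∑ k ∈ s, F k) y i) = ∑ k ∈ s, fun y => pd (F k) y i := by
    funext y
    rw [pd_sum fun k hk => (hF k hk).differentiable two_ne_zero y, Finset.sum_apply]
  simp only [lap_eq_sum_pd, hpd, pd_sum fun k hk => differentiable_pd (hF k hk) _ x,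
    Finset.sum_apply]
  exact Finset.sum_comm

lemma two_mul_infLap (hf : ContDiff ℝ 2 f) : 2 * infLap f = gradInner (gradSq f) f := by
  have hsum : gradSq f = ∑ i, (fun y => pd f y i) * fun y => pd f y i := by
    funext y
    simp [gradSq, pow_two]
  funext x
  have hpd (j : ι) : pd (gradSq f) x j = ∑ i, 2 * (pd f x i * pd (fun y => pd f y i) x j) := by
    rw [hsum, pd_sum fun i _ => ((differentiable_pd hf i).mul (differentiable_pd hf i)) x]
    simp only [pd_mul (differentiable_pd hf _ x) (differentiable_pd hf _ x), two_mul]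
  simp only [Pi.mul_apply, Pi.ofNat_apply, infLap_eq_sum_pd, gradInner, hpd, Finset.mul_sum,
    Finset.sum_mul]
  rw [Finset.sum_comm]
  refine Finset.sum_congr rfl fun j _ => Finset.sum_congr rfl fun i _ => ?_
  ring

end GradientCalculus

section Coordinates

/-- The coordinate function `z ↦ zᵢ`. -/
def coord (i : ι) (z : EuclideanSpace ℝ ι) : ℝ := z i

omit [DecidableEq ι] in
lemma contDiff_coord {k : WithTop ℕ∞} (i : ι) : ContDiff ℝ k (coord i) :=
  (EuclideanSpace.proj (𝕜 := ℝ) i).contDiff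

omit [Fintype ι] [DecidableEq ι] in
@[fun_prop]
lemma differentiable_coord (i : ι) : Differentiable ℝ (coord i) :=
  (EuclideanSpace.proj (𝕜 := ℝ) i).differentiable

lemma pd_coord (i j : ι) (z : EuclideanSpace ℝ ι) : pd (coord i) z j = if i = j then 1 else 0 := by
  have hd : fderiv ℝ (coord i) z = EuclideanSpace.proj (𝕜 := ℝ) i :=
    (EuclideanSpace.proj (𝕜 := ℝ) i).fderiv
  simp [pd, hd]

lemma lap_coord (i : ι) : lap (coord i) = 0 := by
  funext z
  simp [lap, pd_coord]

lemma gradInner_coord_self (i : ι) : gradInner (coord i) (coord i) = 1 := by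
  funext z
  simp [gradInner, pd_coord]

lemma gradInner_coord_of_ne {i j : ι} (hij : i ≠ j) : gradInner (coord i) (coord j) = 0 := by
  funext z
  simp [gradInner, pd_coord, hij]

end Coordinates

/-- `f + i g` is a harmonic morphism to `ℂ` of squared dilation `μ`: a harmonic map whose real and
imaginary parts have orthogonal gradients of equal squared length `μ`. -/
structure IsHarmonicMorphism (f g μ : EuclideanSpace ℝ ι → ℝ) : Prop where
  contDiff_re : ContDiff ℝ 2 f
  contDiff_im : ContDiff ℝ 2 g
  lap_re : lap f = 0
  lap_im : lap g = 0
  gradInner_re_re : gradInner f f = μ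
  gradInner_im_im : gradInner g g = μ
  gradInner_re_im : gradInner f g = 0

/-- Both components of `f + i g` have gradients orthogonal to those of both components of
`f' + i g'`. -/
structure GradOrthogonal (f g f' g' : EuclideanSpace ℝ ι → ℝ) : Prop where
  re_re : gradInner f f' = 0
  re_im : gradInner f g' = 0
  im_re : gradInner g f' = 0
  im_im : gradInner g g' = 0

lemma isHarmonicMorphism_coord {i j : ι} (hij : i ≠ j) :
    IsHarmonicMorphism (coord i) (coord j) 1 where
  contDiff_re := contDiff_coord i
  contDiff_im := contDiff_coord j
  lap_re := lap_coord i
  lap_im := lap_coord j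
  gradInner_re_re := gradInner_coord_self i
  gradInner_im_im := gradInner_coord_self j
  gradInner_re_im := gradInner_coord_of_ne hij

lemma gradOrthogonal_coord {i j k l : ι} (hik : i ≠ k) (hil : i ≠ l) (hjk : j ≠ k) (hjl : j ≠ l) :
    GradOrthogonal (coord i) (coord j) (coord k) (coord l) where
  re_re := gradInner_coord_of_ne hik
  re_im := gradInner_coord_of_ne hil
  im_re := gradInner_coord_of_ne hjk
  im_im := gradInner_coord_of_ne hjl

namespace IsHarmonicMorphism

variable {f g μ : EuclideanSpace ℝ ι → ℝ}

lemma differentiable_re (h : IsHarmonicMorphism f g μ) : Differentiable ℝ f :=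
  h.contDiff_re.differentiable two_ne_zero

lemma differentiable_im (h : IsHarmonicMorphism f g μ) : Differentiable ℝ g :=
  h.contDiff_im.differentiable two_ne_zero

lemma differentiable_dilation (h : IsHarmonicMorphism f g μ) : Differentiable ℝ μ :=
  h.gradInner_re_re ▸ differentiable_gradInner h.contDiff_re h.contDiff_re

lemma gradInner_im_re (h : IsHarmonicMorphism f g μ) : gradInner g f = 0 := by
  rw [gradInner_comm, h.gradInner_re_im]

lemma sq (h : IsHarmonicMorphism f g μ) :
    IsHarmonicMorphism (f ^ 2 - g ^ 2) (2 * f * g) (4 * (f ^ 2 + g ^ 2) * μ) := by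
  have hf := h.contDiff_re
  have hg := h.contDiff_im
  have hf' := h.differentiable_re
  have hg' := h.differentiable_im
  have hff : ContDiff ℝ 2 (f * f) := hf.mul hf
  have hgg : ContDiff ℝ 2 (g * g) := hg.mul hg
  have h2 : ContDiff ℝ 2 (2 : EuclideanSpace ℝ ι → ℝ) := contDiff_const
  have h2f : ContDiff ℝ 2 (2 * f) := h2.mul hf
  constructor
  · exact (hf.pow 2).sub (hg.pow 2)
  · exact h2f.mul hg
  · rw [pow_two, pow_two, lap_sub hff hgg, lap_mul hf hf, lap_mul hg hg, h.lap_re, h.lap_im,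
      h.gradInner_re_re, h.gradInner_im_im]
    ring
  · have hlap : lap (2 * f) = 0 := by
      rw [lap_mul h2 hf, lap_ofNat, gradInner_ofNat_left, h.lap_re]
      ring
    have hgrad : gradInner (2 * f) g = 0 := by
      rw [gradInner_mul_left (by fun_prop) hf', gradInner_ofNat_left, h.gradInner_re_im]
      ring
    rw [lap_mul h2f hg, hlap, hgrad, h.lap_im]
    ring
  all_goals
    simp (disch := fun_prop) only [pow_two, gradInner_sub_left, gradInner_sub_right,
      gradInner_mul_left, gradInner_mul_right, gradInner_ofNat_left, gradInner_ofNat_right,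
      h.gradInner_re_re, h.gradInner_im_im, h.gradInner_re_im, h.gradInner_im_re]
    ring

lemma gradInner_normSq_sq_re (h : IsHarmonicMorphism f g μ) :
    gradInner (f ^ 2 + g ^ 2) (f ^ 2 - g ^ 2) = 4 * μ * (f ^ 2 - g ^ 2) := by
  have hf := h.differentiable_re
  have hg := h.differentiable_im
  simp (disch := fun_prop) only [pow_two, gradInner_add_left, gradInner_sub_right,
    gradInner_mul_left, gradInner_mul_right, h.gradInner_re_re, h.gradInner_im_im,
    h.gradInner_re_im, h.gradInner_im_re]
  ring

lemma gradInner_normSq_sq_im (h : IsHarmonicMorphism f g μ) :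
    gradInner (f ^ 2 + g ^ 2) (2 * f * g) = 4 * μ * (2 * f * g) := by
  have hf := h.differentiable_re
  have hg := h.differentiable_im
  simp (disch := fun_prop) only [pow_two, gradInner_add_left, gradInner_mul_left,
    gradInner_mul_right, gradInner_ofNat_right, h.gradInner_re_re, h.gradInner_im_im,
    h.gradInner_re_im, h.gradInner_im_re]
  ring

lemma sum {κ : Type*} {s : Finset κ} {F G M : κ → EuclideanSpace ℝ ι → ℝ}
    (h : ∀ k ∈ s, IsHarmonicMorphism (F k) (G k) (M k))
    (horth : ∀ k ∈ s, ∀ l ∈ s, k ≠ l → GradOrthogonal (F k) (G k) (F l) (G l)) :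
    IsHarmonicMorphism (∑ k ∈ s, F k) (∑ k ∈ s, G k) (∑ k ∈ s, M k) := by
  have hF k (hk : k ∈ s) := (h k hk).differentiable_re
  have hG k (hk : k ∈ s) := (h k hk).differentiable_im
  constructor
  · simpa only [Finset.sum_fn] using ContDiff.sum fun k hk => (h k hk).contDiff_re
  · simpa only [Finset.sum_fn] using ContDiff.sum fun k hk => (h k hk).contDiff_im
  · rw [lap_sum fun k hk => (h k hk).contDiff_re]
    exact Finset.sum_eq_zero fun k hk => (h k hk).lap_re
  · rw [lap_sum fun k hk => (h k hk).contDiff_im]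
    exact Finset.sum_eq_zero fun k hk => (h k hk).lap_im
  · rw [gradInner_sum_sum_of_orthogonal hF hF fun k hk l hl hkl => (horth k hk l hl hkl).re_re]
    exact Finset.sum_congr rfl fun k hk => (h k hk).gradInner_re_re
  · rw [gradInner_sum_sum_of_orthogonal hG hG fun k hk l hl hkl => (horth k hk l hl hkl).im_im]
    exact Finset.sum_congr rfl fun k hk => (h k hk).gradInner_im_im
  · rw [gradInner_sum_sum_of_orthogonal hF hG fun k hk l hl hkl => (horth k hk l hl hkl).re_im]
    exact Finset.sum_eq_zero fun k hk => (h k hk).gradInner_re_im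

end IsHarmonicMorphism

namespace GradOrthogonal

variable {f g f' g' : EuclideanSpace ℝ ι → ℝ}

lemma symm (h : GradOrthogonal f g f' g') : GradOrthogonal f' g' f g where
  re_re := by rw [gradInner_comm, h.re_re]
  re_im := by rw [gradInner_comm, h.im_re]
  im_re := by rw [gradInner_comm, h.re_im]
  im_im := by rw [gradInner_comm, h.im_im]

lemma sq_right (h : GradOrthogonal f g f' g') (hf' : Differentiable ℝ f')
    (hg' : Differentiable ℝ g') : GradOrthogonal f g (f' ^ 2 - g' ^ 2) (2 * f' * g') := by
  constructor <;>
    simp (disch := fun_prop) only [pow_two, gradInner_sub_right, gradInner_mul_right,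
      gradInner_ofNat_right, h.re_re, h.re_im, h.im_re, h.im_im, mul_zero, add_zero, sub_zero]

lemma sum_right {κ : Type*} {s : Finset κ} {F G : κ → EuclideanSpace ℝ ι → ℝ}
    (hF : ∀ k ∈ s, Differentiable ℝ (F k)) (hG : ∀ k ∈ s, Differentiable ℝ (G k))
    (h : ∀ k ∈ s, GradOrthogonal f g (F k) (G k)) :
    GradOrthogonal f g (∑ k ∈ s, F k) (∑ k ∈ s, G k) where
  re_re := by rw [gradInner_sum_right hF, Finset.sum_eq_zero fun k hk => (h k hk).re_re]
  re_im := by rw [gradInner_sum_right hG, Finset.sum_eq_zero fun k hk => (h k hk).re_im]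
  im_re := by rw [gradInner_sum_right hF, Finset.sum_eq_zero fun k hk => (h k hk).im_re]
  im_im := by rw [gradInner_sum_right hG, Finset.sum_eq_zero fun k hk => (h k hk).im_im]

lemma normSq_left_re (h : GradOrthogonal f g f' g') (hf : Differentiable ℝ f)
    (hg : Differentiable ℝ g) : gradInner (f ^ 2 + g ^ 2) f' = 0 := by
  rw [gradInner_normSq_left hf hg, h.re_re, h.im_re]
  ring

lemma normSq_left_im (h : GradOrthogonal f g f' g') (hf : Differentiable ℝ f)
    (hg : Differentiable ℝ g) : gradInner (f ^ 2 + g ^ 2) g' = 0 := by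
  rw [gradInner_normSq_left hf hg, h.re_im, h.im_im]
  ring

end GradOrthogonal

/-- The function `Im (φ ψ̄)` of `φ = u + i v` and `ψ = c + i d`. -/
def imMulConj (u v c d : EuclideanSpace ℝ ι → ℝ) : EuclideanSpace ℝ ι → ℝ := v * c - u * d

section ImMulConj

variable {u v μ c d ν : EuclideanSpace ℝ ι → ℝ}

lemma gradInner_imMulConj_right (k : EuclideanSpace ℝ ι → ℝ) (hu : Differentiable ℝ u)
    (hv : Differentiable ℝ v) (hc : Differentiable ℝ c) (hd : Differentiable ℝ d) :
    gradInner k (imMulConj u v c d) =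
      v * gradInner k c + c * gradInner k v - u * gradInner k d - d * gradInner k u := by
  rw [imMulConj, gradInner_sub_right (hv.mul hc) (hu.mul hd), gradInner_mul_right hv hc,
    gradInner_mul_right hu hd]
  ring

section HarmonicMorphisms

variable (hφ : IsHarmonicMorphism u v μ) (hψ : IsHarmonicMorphism c d ν)
  (horth : GradOrthogonal u v c d)

include hφ hψ horth

lemma lap_imMulConj : lap (imMulConj u v c d) = 0 := by
  have hvc : ContDiff ℝ 2 (v * c) := hφ.contDiff_im.mul hψ.contDiff_re
  have hud : ContDiff ℝ 2 (u * d) := hφ.contDiff_re.mul hψ.contDiff_im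
  rw [imMulConj, lap_sub hvc hud, lap_mul hφ.contDiff_im hψ.contDiff_re,
    lap_mul hφ.contDiff_re hψ.contDiff_im, hφ.lap_re, hφ.lap_im, hψ.lap_re, hψ.lap_im,
    horth.im_re, horth.re_im]
  ring

lemma gradInner_fst_re_imMulConj : gradInner u (imMulConj u v c d) = -μ * d := by
  rw [gradInner_imMulConj_right u hφ.differentiable_re hφ.differentiable_im hψ.differentiable_re
    hψ.differentiable_im, horth.re_re, horth.re_im, hφ.gradInner_re_re, hφ.gradInner_re_im]
  ring

lemma gradInner_fst_im_imMulConj : gradInner v (imMulConj u v c d) = μ * c := by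
  rw [gradInner_imMulConj_right v hφ.differentiable_re hφ.differentiable_im hψ.differentiable_re
    hψ.differentiable_im, horth.im_re, horth.im_im, hφ.gradInner_im_re, hφ.gradInner_im_im]
  ring

lemma gradInner_snd_re_imMulConj : gradInner c (imMulConj u v c d) = ν * v := by
  rw [gradInner_imMulConj_right c hφ.differentiable_re hφ.differentiable_im hψ.differentiable_re
    hψ.differentiable_im, horth.symm.re_re, horth.symm.re_im, hψ.gradInner_re_re,
    hψ.gradInner_re_im]
  ring

lemma gradInner_snd_im_imMulConj : gradInner d (imMulConj u v c d) = -ν * u := by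
  rw [gradInner_imMulConj_right d hφ.differentiable_re hφ.differentiable_im hψ.differentiable_re
    hψ.differentiable_im, horth.symm.im_re, horth.symm.im_im, hψ.gradInner_im_re,
    hψ.gradInner_im_im]
  ring

lemma gradInner_normSq_fst_imMulConj :
    gradInner (u ^ 2 + v ^ 2) (imMulConj u v c d) = 2 * μ * imMulConj u v c d := by
  rw [gradInner_normSq_left hφ.differentiable_re hφ.differentiable_im,
    gradInner_fst_re_imMulConj hφ hψ horth, gradInner_fst_im_imMulConj hφ hψ horth, imMulConj]
  ring

lemma gradInner_normSq_snd_imMulConj :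
    gradInner (c ^ 2 + d ^ 2) (imMulConj u v c d) = 2 * ν * imMulConj u v c d := by
  rw [gradInner_normSq_left hψ.differentiable_re hψ.differentiable_im,
    gradInner_snd_re_imMulConj hφ hψ horth, gradInner_snd_im_imMulConj hφ hψ horth, imMulConj]
  ring

lemma gradSq_imMulConj : gradSq (imMulConj u v c d) =
    μ * (c ^ 2 + d ^ 2) + ν * (u ^ 2 + v ^ 2) := by
  rw [← gradInner_self, gradInner_imMulConj_right _ hφ.differentiable_re hφ.differentiable_im
    hψ.differentiable_re hψ.differentiable_im]
  simp only [gradInner_comm (imMulConj u v c d), gradInner_fst_re_imMulConj hφ hψ horth,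
    gradInner_fst_im_imMulConj hφ hψ horth, gradInner_snd_re_imMulConj hφ hψ horth,
    gradInner_snd_im_imMulConj hφ hψ horth]
  ring

lemma two_mul_infLap_imMulConj {p q : EuclideanSpace ℝ ι → ℝ}
    (hμ : gradInner μ (imMulConj u v c d) = p * imMulConj u v c d)
    (hν : gradInner ν (imMulConj u v c d) = q * imMulConj u v c d) :
    2 * infLap (imMulConj u v c d) =
      (4 * μ * ν + p * (c ^ 2 + d ^ 2) + q * (u ^ 2 + v ^ 2)) * imMulConj u v c d := by
  have hu := hφ.differentiable_re
  have hv := hφ.differentiable_im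
  have hc := hψ.differentiable_re
  have hd := hψ.differentiable_im
  have hμ' := hφ.differentiable_dilation
  have hν' := hψ.differentiable_dilation
  have hP : ContDiff ℝ 2 (imMulConj u v c d) :=
    (hφ.contDiff_im.mul hψ.contDiff_re).sub (hφ.contDiff_re.mul hψ.contDiff_im)
  rw [two_mul_infLap hP, gradSq_imMulConj hφ hψ horth,
    gradInner_add_left (by fun_prop) (by fun_prop), gradInner_mul_left hμ' (by fun_prop),
    gradInner_mul_left hν' (by fun_prop), gradInner_normSq_fst_imMulConj hφ hψ horth,
    gradInner_normSq_snd_imMulConj hφ hψ horth, hμ, hν]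
  ring

end HarmonicMorphisms

lemma gradInner_dilation_sq_imMulConj {a b q : EuclideanSpace ℝ ι → ℝ}
    (hu : Differentiable ℝ u) (hv : Differentiable ℝ v) (hτ : IsHarmonicMorphism a b ν)
    (horth : GradOrthogonal a b u v) (hνu : gradInner ν u = 0) (hνv : gradInner ν v = 0)
    (hνa : gradInner ν a = q * a) (hνb : gradInner ν b = q * b) :
    gradInner (4 * (a ^ 2 + b ^ 2) * ν) (imMulConj u v (a ^ 2 - b ^ 2) (2 * a * b)) =
      (16 * ν ^ 2 + 8 * q * (a ^ 2 + b ^ 2)) *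
        imMulConj u v (a ^ 2 - b ^ 2) (2 * a * b) := by
  have ha := hτ.differentiable_re
  have hb := hτ.differentiable_im
  have hν := hτ.differentiable_dilation
  simp (disch := fun_prop) only [imMulConj, pow_two, gradInner_add_left, gradInner_sub_right,
    gradInner_mul_left, gradInner_mul_right, gradInner_ofNat_left, gradInner_ofNat_right,
    hτ.gradInner_re_re, hτ.gradInner_im_im, hτ.gradInner_re_im, hτ.gradInner_im_re, horth.re_re,
    horth.re_im, horth.im_re, horth.im_im, hνu, hνv, hνa, hνb]
  ring

end ImMulConj

section Quintic

variable (n : ℕ)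

/-- The squared length `Σ_{j ≤ n} (xⱼ² + yⱼ²)`, a quarter of the squared dilation of `T₁ + i T₂`. -/
def sqRadius : EuclideanSpace ℝ (Fin (n + 1) ⊕ Fin (n + 1)) → ℝ :=
  ∑ j : Fin n, (coord (Sum.inl j.castSucc) ^ 2 + coord (Sum.inr j.castSucc) ^ 2)

lemma T1_eq_sum : T1 n =
    ∑ j : Fin n, (coord (Sum.inl j.castSucc) ^ 2 - coord (Sum.inr j.castSucc) ^ 2) := by
  funext z
  simp [T1, coord]

lemma T2_eq_sum : T2 n =
    ∑ j : Fin n, 2 * coord (Sum.inl j.castSucc) * coord (Sum.inr j.castSucc) := by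
  funext z
  simp [T2, coord]

lemma quinticP_eq_imMulConj : QuinticP n =
    imMulConj (coord (Sum.inl (Fin.last n))) (coord (Sum.inr (Fin.last n)))
      (T1 n ^ 2 - T2 n ^ 2) (2 * T1 n * T2 n) := rfl

variable {n}

lemma isHarmonicMorphism_coord_inl_inr (i : Fin (n + 1)) :
    IsHarmonicMorphism (coord (Sum.inl i : Fin (n + 1) ⊕ Fin (n + 1))) (coord (Sum.inr i)) 1 :=
  isHarmonicMorphism_coord Sum.inl_ne_inr

lemma gradOrthogonal_coord_inl_inr {i j : Fin (n + 1)} (hij : i ≠ j) :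
    GradOrthogonal (coord (Sum.inl i : Fin (n + 1) ⊕ Fin (n + 1))) (coord (Sum.inr i))
      (coord (Sum.inl j)) (coord (Sum.inr j)) :=
  gradOrthogonal_coord (Sum.inl_injective.ne hij) Sum.inl_ne_inr Sum.inr_ne_inl
    (Sum.inr_injective.ne hij)

lemma gradOrthogonal_coord_sq {i j : Fin (n + 1)} (hij : i ≠ j) :
    GradOrthogonal (coord (Sum.inl i : Fin (n + 1) ⊕ Fin (n + 1))) (coord (Sum.inr i))
      (coord (Sum.inl j) ^ 2 - coord (Sum.inr j) ^ 2)
      (2 * coord (Sum.inl j) * coord (Sum.inr j)) :=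
  (gradOrthogonal_coord_inl_inr hij).sq_right (by fun_prop) (by fun_prop)

variable (n)

lemma gradOrthogonal_last_T :
    GradOrthogonal (coord (Sum.inl (Fin.last n))) (coord (Sum.inr (Fin.last n)))
      (T1 n) (T2 n) := by
  rw [T1_eq_sum, T2_eq_sum]
  exact .sum_right (fun _ _ => by fun_prop) (fun _ _ => by fun_prop) fun j _ =>
    gradOrthogonal_coord_sq j.castSucc_lt_last.ne'

lemma isHarmonicMorphism_T : IsHarmonicMorphism (T1 n) (T2 n) (4 * sqRadius n) := by
  rw [T1_eq_sum, T2_eq_sum, sqRadius, Finset.mul_sum]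
  refine .sum (fun j _ => ?_) fun j _ k _ hjk => ?_
  · simpa only [mul_one] using (isHarmonicMorphism_coord_inl_inr j.castSucc).sq
  · have hjk' : j.castSucc ≠ k.castSucc := (Fin.castSucc_injective n).ne hjk
    exact (gradOrthogonal_coord_sq hjk'.symm).symm.sq_right (by fun_prop) (by fun_prop)

lemma gradInner_sqRadius_T1 : gradInner (sqRadius n) (T1 n) = 4 * T1 n := by
  rw [sqRadius, T1_eq_sum, gradInner_sum_sum_of_orthogonal (fun _ _ => by fun_prop)
    (fun _ _ => by fun_prop), Finset.mul_sum]
  · refine Finset.sum_congr rfl fun j _ => ?_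
    rw [(isHarmonicMorphism_coord_inl_inr j.castSucc).gradInner_normSq_sq_re, mul_one]
  · intro j _ k _ hjk
    exact (gradOrthogonal_coord_sq ((Fin.castSucc_injective n).ne hjk)).normSq_left_re
      (by fun_prop) (by fun_prop)

lemma gradInner_sqRadius_T2 : gradInner (sqRadius n) (T2 n) = 4 * T2 n := by
  rw [sqRadius, T2_eq_sum, gradInner_sum_sum_of_orthogonal (fun _ _ => by fun_prop)
    (fun _ _ => by fun_prop), Finset.mul_sum]
  · refine Finset.sum_congr rfl fun j _ => ?_
    rw [(isHarmonicMorphism_coord_inl_inr j.castSucc).gradInner_normSq_sq_im, mul_one]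
  · intro j _ k _ hjk
    exact (gradOrthogonal_coord_sq ((Fin.castSucc_injective n).ne hjk)).normSq_left_im
      (by fun_prop) (by fun_prop)

lemma gradInner_sqRadius_last_re :
    gradInner (sqRadius n) (coord (Sum.inl (Fin.last n))) = 0 := by
  rw [sqRadius, gradInner_sum_left fun _ _ => by fun_prop]
  exact Finset.sum_eq_zero fun j _ =>
    (gradOrthogonal_coord_inl_inr j.castSucc_lt_last.ne).normSq_left_re
      (by fun_prop) (by fun_prop)

lemma gradInner_sqRadius_last_im :
    gradInner (sqRadius n) (coord (Sum.inr (Fin.last n))) = 0 := by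
  rw [sqRadius, gradInner_sum_left fun _ _ => by fun_prop]
  exact Finset.sum_eq_zero fun j _ =>
    (gradOrthogonal_coord_inl_inr j.castSucc_lt_last.ne).normSq_left_im
      (by fun_prop) (by fun_prop)

lemma lap_quinticP : lap (QuinticP n) = 0 :=
  lap_imMulConj (isHarmonicMorphism_coord_inl_inr (Fin.last n)) (isHarmonicMorphism_T n).sq
    ((gradOrthogonal_last_T n).sq_right (isHarmonicMorphism_T n).differentiable_re
      (isHarmonicMorphism_T n).differentiable_im)

lemma two_mul_infLap_quinticP : 2 * infLap (QuinticP n) =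
    (64 * (T1 n ^ 2 + T2 n ^ 2) * sqRadius n +
      (256 * sqRadius n ^ 2 + 128 * (T1 n ^ 2 + T2 n ^ 2)) *
        (coord (Sum.inl (Fin.last n)) ^ 2 + coord (Sum.inr (Fin.last n)) ^ 2)) * QuinticP n := by
  have hφ := isHarmonicMorphism_coord_inl_inr (Fin.last n)
  have hT := isHarmonicMorphism_T n
  have horth := gradOrthogonal_last_T n
  have hR : Differentiable ℝ (sqRadius n) := Differentiable.sum fun _ _ => by fun_prop
  have hν := gradInner_dilation_sq_imMulConj (q := 16) hφ.differentiable_re hφ.differentiable_im hT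
    horth.symm
    (by rw [gradInner_four_mul_left hR, gradInner_sqRadius_last_re, mul_zero])
    (by rw [gradInner_four_mul_left hR, gradInner_sqRadius_last_im, mul_zero])
    (by rw [gradInner_four_mul_left hR, gradInner_sqRadius_T1]; ring)
    (by rw [gradInner_four_mul_left hR, gradInner_sqRadius_T2]; ring)
  rw [quinticP_eq_imMulConj, two_mul_infLap_imMulConj hφ hT.sq
    (horth.sq_right hT.differentiable_re hT.differentiable_im) (p := 0)
    (by rw [gradInner_one_left, zero_mul]) hν]
  ring

end Quintic

/-- the quintic `P = y_{n+1}·(T₁² − T₂²) − x_{n+1}·(2T₁T₂)` satisfies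
`‖∇P‖²·ΔP − Δ_∞P = 0` at every point of `{P = 0}` with `∇P ≠ 0`; hence
`{y_{n+1}(T₁² − T₂²) = x_{n+1}(2T₁T₂)}` is a minimal quintic cone in `ℝ^{2n+2}`. -/
theorem quintic_cone_minimal (n : ℕ) (hn : 1 ≤ n)
    (z : EuclideanSpace ℝ (Fin (n + 1) ⊕ Fin (n + 1)))
    (hz : QuinticP n z = 0) (hgrad : ∃ i, pd (QuinticP n) z i ≠ 0) :
    gradSq (QuinticP n) z * lap (QuinticP n) z - infLap (QuinticP n) z = 0 := by
  have hinfLap : infLap (QuinticP n) z = 0 := by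
    simpa [hz] using congrFun (two_mul_infLap_quinticP n) z
  rw [lap_quinticP, Pi.zero_apply, mul_zero, hinfLap, sub_zero]
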